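/- (Soundness of the pruning criterion in IxG*.) Let (V, E, w) be a finite weighted directed graph with nonnegative weights, let s, t, v be vertices, let ε ≥ 1 and u be real numbers, and let l be a real number with 0 ≤ l and l ≤ the cost of every walk from v to t. Let W be a walk from s to t that passes through v, split at an occurrence of v into a prefix of cost c and a suffix from v to t. If c + ε·l > ε·u, then the cost of W is strictly greater than u. -/

import Mathlib

/-- A walk from `s` to `t` in the directed graph with adjacency `E`:
a nonempty list of vertices starting at `s`, ending at `t`, with
consecutive vertices adjacent. -/
def IsWalk {V : Type*} (E : V → V → Prop) (s t : V) (l : List V) : Prop :=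
  l ≠ [] ∧ l.head? = some s ∧ l.getLast? = some t ∧ l.Chain' E

/-- Cost of a walk: the sum of the weights of its consecutive pairs. -/
def walkCost {V : Type*} (w : V → V → ℝ) (l : List V) : ℝ :=
  ((l.zip l.tail).map fun p => w p.1 p.2).sum

theorem walkCost_cons_cons {V : Type*} (w : V → V → ℝ) (a b : V) (l : List V) :
    walkCost w (a :: b :: l) = w a b + walkCost w (b :: l) := by
  simp [walkCost]

theorem walkCost_split {V : Type*} (w : V → V → ℝ) (v : V) (l₂ : List V) : ∀ l₁ : List V,
    walkCost w (l₁ ++ v :: l₂) = walkCost w (l₁ ++ [v]) + walkCost w (v :: l₂)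
  | [] => by simp [walkCost]
  | [a] => by
    simp only [List.cons_append, List.nil_append, walkCost_cons_cons]
    simp [walkCost]
  | a :: b :: l => by
    have ih := walkCost_split w v l₂ (b :: l)
    simp only [List.cons_append, walkCost_cons_cons] at ih ⊢
    rw [ih]; ring

theorem walkCost_nonneg {V : Type*} (E : V → V → Prop) (w : V → V → ℝ)
    (hw : ∀ a b, E a b → 0 ≤ w a b) : ∀ l : List V, List.IsChain E l → 0 ≤ walkCost w l
  | [], _ => by simp [walkCost]
  | [a], _ => by simp [walkCost]
  | a :: b :: l, h => by
    rw [List.isChain_cons_cons] at h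
    rw [walkCost_cons_cons]
    exact add_nonneg (hw _ _ h.1) (walkCost_nonneg E w hw _ h.2)

/-- Soundness of the pruning criterion in IxG*. -/
theorem ixg_star_prune_sound
    {V : Type*} [Fintype V] (E : V → V → Prop) (w : V → V → ℝ)
    (hw : ∀ a b, E a b → 0 ≤ w a b) (s t v : V)
    (ε u lb : ℝ) (hε : 1 ≤ ε) (hlb0 : 0 ≤ lb)
    (hlb : ∀ l, IsWalk E v t l → lb ≤ walkCost w l)
    (l₁ l₂ : List V) (hWalk : IsWalk E s t (l₁ ++ v :: l₂))
    (c : ℝ) (hc : c = walkCost w (l₁ ++ [v]))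
    (hprune : c + ε * lb > ε * u) :
    walkCost w (l₁ ++ v :: l₂) > u := by
  obtain ⟨-, -, hlast, hch⟩ := hWalk
  have hch' : List.IsChain E (l₁ ++ v :: l₂) := hch
  have h2 : List.IsChain E (v :: l₂) := hch'.suffix ⟨l₁, rfl⟩
  have h1 : List.IsChain E (l₁ ++ [v]) := hch'.prefix ⟨l₂, by simp⟩
  have hd := hlb (v :: l₂) ⟨by simp, by simp, by simpa using hlast, h2⟩
  have hc0 := walkCost_nonneg E w hw _ h1
  rw [← hc] at hc0
  rw [walkCost_split, ← hc]
  by_contra hcon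
  have : c + lb ≤ u := by linarith
  nlinarith [mul_le_mul_of_nonneg_left this (by linarith : (0:ℝ) ≤ ε),
    mul_nonneg (by linarith : (0:ℝ) ≤ ε - 1) hc0]
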